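/- Fix n ≥ 1, let Π_n = {1,…,n} and Θ_n = {♯_1,…,♯_n} be disjoint copies of an n-element alphabet and Σ = Π_n ∪ Θ_n. Let A_n be the NFA over Σ with state set {p, r} ∪ {p_i | i ∈ 1..n} ∪ {q_i | i ∈ 1..n}, initial state p, and transitions, for every i ∈ 1..n: p →i q_i, p_i →i q_i, q_i →i q_i; for every j ≠ i: p →j p_i, p_i →j p_i, q_i →j q_i; and q_i →♯_i r. Define F as the smallest relation such that (p_i, ♯_i) ∈ F and (p, ♯_i) ∈ F for all i ∈ 1..n, and (r, a) ∈ F for every a ∈ Σ. Then F flanks A_n. -/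

import Mathlib

/-- A nondeterministic finite automaton (all states final). -/
structure NFA' (Q A : Type) where
  E : Q → A → Q → Prop
  I : Set Q

namespace NFA'

variable {Q A : Type}

/-- One step of the automaton on a set of states. -/
def step (M : NFA' Q A) (S : Set Q) (a : A) : Set Q := {q' | ∃ q ∈ S, M.E q a q'}

/-- `M.reach u` is the set of states reached after reading the word `u`
(`M(ε) = I`, `M(u·a) = {q' | ∃ q ∈ M(u), (q,a,q') ∈ E}`). -/
def reach (M : NFA' Q A) (u : List A) : Set Q := u.foldl M.step M.I

/-- The (prefix-closed) language of `M`: words `u` with `M(u) ≠ ∅`. -/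
def lang (M : NFA' Q A) : Set (List A) := {u | (M.reach u).Nonempty}

/-- `F` flanks `M`: for all words `u` and symbols `a`,
`u ∈ L(M) ∧ u·a ∉ L(M)` iff some state of `M(u)` forbids `a`. -/
def Flanks (M : NFA' Q A) (F : Q → A → Prop) : Prop :=
  ∀ (u : List A) (a : A),
    (u ∈ M.lang ∧ u ++ [a] ∉ M.lang) ↔ ∃ q ∈ M.reach u, F q a

end NFA'

/-- The language `L_n` over `Σ = Π_n ⊕ Θ_n` (where `Sum.inl i` is the plain
symbol `i` and `Sum.inr i` is `♯_i`). -/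
def Ln (n : ℕ) : Set (List (Fin n ⊕ Fin n)) :=
  {u | ∀ x ∈ u, x.isLeft = true} ∪
  ⋃ i : Fin n, {w | ∃ v : List (Fin n ⊕ Fin n),
    (∀ x ∈ v, x.isLeft = true) ∧ Sum.inl i ∈ v ∧ w = v ++ [Sum.inr i]}

/-- The states of the NFA `A_n`: `p`, `r` and the states `p_i`, `q_i` for `i ∈ 1..n`. -/
inductive St (n : ℕ) : Type where
  | p : St n
  | r : St n
  | pi (i : Fin n) : St n
  | qi (i : Fin n) : St n
  deriving DecidableEq

instance (n : ℕ) : Fintype (St n) := by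
  classical
  have : Function.Surjective
      (fun x : (Unit ⊕ Unit) ⊕ (Fin n ⊕ Fin n) =>
        match x with
        | .inl (.inl _) => St.p
        | .inl (.inr _) => St.r
        | .inr (.inl i) => St.pi i
        | .inr (.inr i) => St.qi i) := by
    intro s; cases s with
    | p => exact ⟨.inl (.inl ()), rfl⟩
    | r => exact ⟨.inl (.inr ()), rfl⟩
    | pi i => exact ⟨.inr (.inl i), rfl⟩
    | qi i => exact ⟨.inr (.inr i), rfl⟩
  exact Fintype.ofSurjective _ this

/-- The NFA `A_n`: initial state `p`, and for every `i ∈ 1..n` the transitions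
`p →i q_i`, `p_i →i q_i`, `q_i →i q_i`; for every `j ≠ i` the transitions
`p →j p_i`, `p_i →j p_i`, `q_i →j q_i`; and `q_i →♯_i r`. -/
def An (n : ℕ) : NFA' (St n) (Fin n ⊕ Fin n) where
  E s x s' :=
    (∃ i : Fin n, s = St.p ∧ x = Sum.inl i ∧ s' = St.qi i) ∨
    (∃ i : Fin n, s = St.pi i ∧ x = Sum.inl i ∧ s' = St.qi i) ∨
    (∃ i j : Fin n, s = St.qi i ∧ x = Sum.inl j ∧ s' = St.qi i) ∨
    (∃ i j : Fin n, j ≠ i ∧ s = St.p ∧ x = Sum.inl j ∧ s' = St.pi i) ∨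
    (∃ i j : Fin n, j ≠ i ∧ s = St.pi i ∧ x = Sum.inl j ∧ s' = St.pi i) ∨
    (∃ i : Fin n, s = St.qi i ∧ x = Sum.inr i ∧ s' = St.r)
  I := {St.p}

/-!
After a nonempty word over `Π_n` whose set of letters is `T`, the automaton `A_n` is in the states
`q_i` for `i ∈ T` and `p_i` for `i ∉ T`. From there every plain letter is possible, whereas `♯_j` is
impossible exactly when `j ∉ T`, that is, when the state `p_j` is present. The initial state `p` has
the transitions and the forbidden letters of all the `p_i` together, so `{p}` behaves like the case
`T = ∅`. The only other nonempty state set reached is the dead end `{r}`.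
-/

namespace NFA'

variable {Q A : Type} {M : NFA' Q A} {F : Q → A → Prop}

theorem reach_append_singleton (M : NFA' Q A) (u : List A) (a : A) :
    M.reach (u ++ [a]) = M.step (M.reach u) a := by
  simp only [reach, List.foldl_append, List.foldl_cons, List.foldl_nil]

theorem nonempty_of_step_nonempty {S : Set Q} {a : A} (h : (M.step S a).Nonempty) : S.Nonempty :=
  let ⟨_, q, hq, _⟩ := h
  ⟨q, hq⟩

theorem reach_induction {P : Set Q → Prop} (init : P M.I)
    (step : ∀ S a, P S → (M.step S a).Nonempty → P (M.step S a))
    {u : List A} (hu : (M.reach u).Nonempty) : P (M.reach u) := by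
  induction u using List.reverseRecOn with
  | nil => exact init
  | append_singleton u a ih =>
    rw [reach_append_singleton] at hu ⊢
    exact step _ a (ih (nonempty_of_step_nonempty hu)) hu

theorem flanks_of_invariant {P : Set Q → Prop} (init : P M.I)
    (step : ∀ S a, P S → (M.step S a).Nonempty → P (M.step S a))
    (flank : ∀ S a, P S → (M.step S a = ∅ ↔ ∃ q ∈ S, F q a)) :
    M.Flanks F := by
  intro u a
  have flank_reach (hu : (M.reach u).Nonempty) :
      M.step (M.reach u) a = ∅ ↔ ∃ q ∈ M.reach u, F q a :=
    flank _ a (reach_induction init step hu)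
  simp only [lang, Set.mem_ofPred_eq, reach_append_singleton, Set.not_nonempty_iff_eq_empty]
  constructor
  · rintro ⟨hu, hempty⟩
    exact (flank_reach hu).mp hempty
  · rintro ⟨q, hq, hF⟩
    exact ⟨⟨q, hq⟩, (flank_reach ⟨q, hq⟩).mpr ⟨q, hq, hF⟩⟩

end NFA'

namespace An

variable {n : ℕ} {i j : Fin n} {s : St n} {a : Fin n ⊕ Fin n} {T : Set (Fin n)}

theorem E_pi_inl : (An n).E (.pi i) (.inl j) s ↔ s = if i = j then .qi i else .pi i := by
  grind [An]

theorem not_E_pi_inr : ¬ (An n).E (.pi i) (.inr j) s := by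
  simp [An]

theorem E_qi_inl : (An n).E (.qi i) (.inl j) s ↔ s = .qi i := by
  simp [An]

theorem E_qi_inr : (An n).E (.qi i) (.inr j) s ↔ i = j ∧ s = .r := by
  grind [An]

theorem not_E_r : ¬ (An n).E .r a s := by
  simp [An]

theorem E_p_iff_exists_E_pi : (An n).E .p a s ↔ ∃ i, (An n).E (.pi i) a s := by
  simp [An, exists_or]

/-- The state set of `A_n` after a nonempty word over `Π_n` whose set of letters is `T`. -/
def seen (T : Set (Fin n)) : Set (St n) := St.qi '' T ∪ St.pi '' Tᶜ

theorem qi_mem_seen (hi : i ∈ T) : St.qi i ∈ seen T :=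
  .inl ⟨i, hi, rfl⟩

theorem exists_mem_seen {P : St n → Prop} :
    (∃ s ∈ seen T, P s) ↔ (∃ i ∈ T, P (.qi i)) ∨ ∃ i ∉ T, P (.pi i) := by
  simp only [seen, Set.mem_union, or_and_right, exists_or, Set.exists_mem_image, Set.mem_compl_iff]

theorem step_seen_inl (T : Set (Fin n)) (j : Fin n) :
    (An n).step (seen T) (.inl j) = seen (insert j T) := by
  ext s
  simp only [NFA'.step, Set.mem_ofPred_eq, exists_mem_seen, E_qi_inl, E_pi_inl]
  grind [seen]

theorem step_seen_inr_of_mem (hj : j ∈ T) : (An n).step (seen T) (.inr j) = {.r} := by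
  ext s
  simp [NFA'.step, exists_mem_seen, E_qi_inr, not_E_pi_inr, hj]

theorem step_seen_inr_of_notMem (hj : j ∉ T) : (An n).step (seen T) (.inr j) = ∅ := by
  ext s
  simp [NFA'.step, exists_mem_seen, E_qi_inr, not_E_pi_inr, hj]

theorem step_p_eq_step_seen_empty (a : Fin n ⊕ Fin n) :
    (An n).step {.p} a = (An n).step (seen ∅) a := by
  ext s
  simp [NFA'.step, exists_mem_seen, E_p_iff_exists_E_pi]

theorem step_r (a : Fin n ⊕ Fin n) : (An n).step {.r} a = ∅ := by
  simp [NFA'.step, not_E_r]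

/-- An invariant of the nonempty state sets reached by `A_n`. It also admits `seen ∅`, which is not
reached but behaves like `{p}`. -/
inductive IsMacrostate : Set (St n) → Prop
  | p : IsMacrostate {.p}
  | seen (T : Set (Fin n)) : IsMacrostate (seen T)
  | r : IsMacrostate {.r}

theorem isMacrostate_step_seen (h : ((An n).step (seen T) a).Nonempty) :
    IsMacrostate ((An n).step (seen T) a) := by
  rcases a with j | j
  · exact step_seen_inl T j ▸ .seen (insert j T)
  · by_cases hj : j ∈ T
    · exact step_seen_inr_of_mem hj ▸ .r
    · exact absurd (step_seen_inr_of_notMem hj) h.ne_empty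

theorem IsMacrostate.step {S : Set (St n)} (hS : IsMacrostate S)
    (h : ((An n).step S a).Nonempty) : IsMacrostate ((An n).step S a) := by
  cases hS with
  | p =>
    rw [step_p_eq_step_seen_empty] at h ⊢
    exact isMacrostate_step_seen h
  | seen T => exact isMacrostate_step_seen h
  | r => exact absurd (step_r a) h.ne_empty

/-- The relation `F` that flanks `A_n`. -/
def Forbids (s : St n) (x : Fin n ⊕ Fin n) : Prop :=
  (∃ i : Fin n, s = .p ∧ x = .inr i) ∨ (∃ i : Fin n, s = .pi i ∧ x = .inr i) ∨ s = .r

theorem exists_mem_seen_forbids_iff : (∃ s ∈ seen T, Forbids s a) ↔ ∃ j ∉ T, a = .inr j := by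
  simp [exists_mem_seen, Forbids]

theorem step_seen_eq_empty_iff : (An n).step (seen T) a = ∅ ↔ ∃ j ∉ T, a = .inr j := by
  rcases a with j | j
  · have hqj : St.qi j ∈ seen (insert j T) := qi_mem_seen (Set.mem_insert j T)
    simpa [step_seen_inl] using Set.Nonempty.ne_empty ⟨_, hqj⟩
  · by_cases hj : j ∈ T
    · simp [step_seen_inr_of_mem hj, hj]
    · simp [step_seen_inr_of_notMem hj, hj]

theorem IsMacrostate.step_eq_empty_iff {S : Set (St n)} (hS : IsMacrostate S) :
    (An n).step S a = ∅ ↔ ∃ s ∈ S, Forbids s a := by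
  cases hS with
  | p => simp [step_p_eq_step_seen_empty, step_seen_eq_empty_iff, Forbids]
  | seen T => rw [step_seen_eq_empty_iff, exists_mem_seen_forbids_iff]
  | r => simp [step_r, Forbids]

end An

/-- the relation consisting of the pairs `(p, ♯_i)` and
`(p_i, ♯_i)` for `i ∈ 1..n`, together with `(r, a)` for every symbol `a`,
flanks the NFA `A_n`. -/
theorem stmt15 (n : ℕ) (hn : 1 ≤ n) :
    (An n).Flanks (fun s x =>
      (∃ i : Fin n, s = St.p ∧ x = Sum.inr i) ∨
      (∃ i : Fin n, s = St.pi i ∧ x = Sum.inr i) ∨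
      s = St.r) := by
  have flank (S : Set (St n)) (a : Fin n ⊕ Fin n) (hS : An.IsMacrostate S) :
      (An n).step S a = ∅ ↔ ∃ s ∈ S, An.Forbids s a :=
    hS.step_eq_empty_iff
  exact NFA'.flanks_of_invariant An.IsMacrostate.p (fun _ _ hS ↦ hS.step) flank
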